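/- Let K be a Cantor set in ℝ and let g ∈ diff^{1+Lip}(K). Then there exists an integer N ≥ 1 such that Per(g) = { p ∈ K : g^N(p) = p }, where Per(g) = { p ∈ K : g^n(p) = p for some integer n ≥ 1 } is the set of periodic points of g. -/

import Mathlib

open Set

/-- `K` is a Cantor set in `ℝ`: nonempty, compact, totally disconnected, perfect. -/
def IsCantorInR (K : Set ℝ) : Prop :=
  K.Nonempty ∧ IsCompact K ∧ IsTotallyDisconnected K ∧ Perfect K

open Classical in
/-- Apply a permutation of `K` to a real number (identity outside `K`). -/
noncomputable def apK (K : Set ℝ) (f : Equiv.Perm K) (y : ℝ) : ℝ :=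
  if h : y ∈ K then (f ⟨y, h⟩ : ℝ) else y

/-- `f` locally coincides with a `C¹` embedding of an open interval with
nowhere-vanishing derivative. -/
def IsD1 (K : Set ℝ) (f : Equiv.Perm K) : Prop :=
  ∀ x : K, ∃ a b : ℝ, (x : ℝ) ∈ Set.Ioo a b ∧
    ∃ F F' : ℝ → ℝ,
      (∀ y ∈ Set.Ioo a b, HasDerivAt F (F' y) y ∧ F' y ≠ 0) ∧
      ContinuousOn F' (Set.Ioo a b) ∧
      Set.InjOn F (Set.Ioo a b) ∧
      (∀ y : ℝ, y ∈ Set.Ioo a b → y ∈ K → F y = apK K f y)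

/-- `f` locally coincides with a `C¹` embedding of an open interval with
nowhere-vanishing derivative whose log-derivative is Lipschitz. -/
def IsD1Lip (K : Set ℝ) (f : Equiv.Perm K) : Prop :=
  ∀ x : K, ∃ a b : ℝ, (x : ℝ) ∈ Set.Ioo a b ∧
    ∃ F F' : ℝ → ℝ,
      (∀ y ∈ Set.Ioo a b, HasDerivAt F (F' y) y ∧ F' y ≠ 0) ∧
      ContinuousOn F' (Set.Ioo a b) ∧
      Set.InjOn F (Set.Ioo a b) ∧
      (∃ C : NNReal, LipschitzOnWith C (fun y => Real.log |F' y|) (Set.Ioo a b)) ∧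
      (∀ y : ℝ, y ∈ Set.Ioo a b → y ∈ K → F y = apK K f y)

/-- membership in `diff¹(K)`: a homeomorphism of `K` locally coinciding
with `C¹` diffeomorphisms of intervals of `ℝ`. -/
def MemDiff1 (K : Set ℝ) (f : Equiv.Perm K) : Prop :=
  Continuous (fun x : K => f x) ∧ Continuous (fun x : K => f.symm x) ∧ IsD1 K f

/-- membership in `diff^{1+Lip}(K)`. -/
def MemDiffLip (K : Set ℝ) (f : Equiv.Perm K) : Prop :=
  Continuous (fun x : K => f x) ∧ Continuous (fun x : K => f.symm x) ∧ IsD1Lip K f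

/-- The derivative of `f` at `x`, as a limit of difference quotients within `K`. -/
def HasDerivOnK (K : Set ℝ) (f : Equiv.Perm K) (x d : ℝ) : Prop :=
  Filter.Tendsto (fun y : ℝ => (apK K f y - apK K f x) / (y - x))
    (nhdsWithin x (K \ {x})) (nhds d)

/-- `f` is increasing on the interval `I`: it coincides on `I ∩ K` with an
increasing `C¹` diffeomorphism of `I` onto an interval of `ℝ`. -/
def IncreasingOnK (K : Set ℝ) (f : Equiv.Perm K) (I : Set ℝ) : Prop :=
  ∃ F F' : ℝ → ℝ,
    StrictMonoOn F I ∧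
    (∀ y ∈ I, HasDerivWithinAt F (F' y) I y ∧ 0 < F' y) ∧
    ContinuousOn F' I ∧
    (∀ y ∈ I, y ∈ K → F y = apK K f y)

/-- `A` is invariant under the subgroup `G`. -/
def IsInvariantSet (K : Set ℝ) (G : Subgroup (Equiv.Perm K)) (A : Set ℝ) : Prop :=
  ∀ g ∈ G, ∀ x ∈ A, apK K g x ∈ A

/-- `A` is a minimal invariant set for the action of `G` on `K`. -/
def IsMinimalInvariantSet (K : Set ℝ) (G : Subgroup (Equiv.Perm K)) (A : Set ℝ) : Prop :=
  A.Nonempty ∧ A ⊆ K ∧ IsClosed A ∧ IsInvariantSet K G A ∧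
    ∀ B : Set ℝ, B.Nonempty → B ⊆ A → IsClosed B → IsInvariantSet K G B → B = A

/-- The set of points of `K` fixed by every element of `H`. -/
def fixedSet (K : Set ℝ) (H : Subgroup (Equiv.Perm K)) : Set ℝ :=
  {x | x ∈ K ∧ ∀ g ∈ H, apK K g x = x}

/-- `a, b` generate a free subsemigroup: distinct nonempty positive words in
`a` and `b` define distinct elements. -/
def IsFreePair {M : Type*} [Monoid M] (a b : M) : Prop :=
  ∀ w₁ w₂ : List Bool, w₁ ≠ [] → w₂ ≠ [] →
    (w₁.map (fun t => if t then a else b)).prod = (w₂.map (fun t => if t then a else b)).prod →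
    w₁ = w₂

/-- `G` contains no free subsemigroup on two generators. -/
def HasNoFreeSubsemigroup {Γ : Type*} [Group Γ] (G : Subgroup Γ) : Prop :=
  ¬ ∃ a ∈ G, ∃ b ∈ G, IsFreePair a b

/-- `p` is accumulated on the left by `A`. -/
def AccLeft (p : ℝ) (A : Set ℝ) : Prop := ∀ α > 0, (Set.Ico (p - α) p ∩ A).Nonempty

/-- `p` is accumulated on the right by `A`. -/
def AccRight (p : ℝ) (A : Set ℝ) : Prop := ∀ α > 0, (Set.Ioc p (p + α) ∩ A).Nonempty

/-!
Points of a periodic orbit `O` which do not lie between two `δ`-close points of `O` are boundedly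
many, so if `O` is long, one of them, `y`, does not return to such points for a long time `T`.
The images of the neighbours `a`, `b` of `g y` in `O` then remain the neighbours of the image of
`g y`, and remain `δ`-close, up to time `T`; the gaps they enclose overlap at most twice, so their
distances add up to at most twice the diameter of `K`. Moreover `a` and `b` are not too close,
because `y` is not between `δ`-close points. As the logarithm of the derivative is Lipschitz, `g`
has bounded distortion, and a limit of such pairs attracts a whole neighbourhood of both of its
members: two distinct periodic points would be asymptotic, which is absurd. Hence the minimal
periods are bounded, say by `R`, and `N = R!` works.
-/

open Filter Function Topology
open scoped NNReal

section PeriodicPoints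

variable {α : Type*} {f : α → α}

theorem minimalPeriod_le_card {S : Finset α} {x : α} (h : ∀ n, f^[n] x ∈ S) :
    minimalPeriod f x ≤ S.card := by
  simpa using Finset.card_le_card_of_injOn (s := Finset.range (minimalPeriod f x)) (f^[·] x)
    (fun n _ => h n) (by simpa using iterate_injOn_Iio_minimalPeriod)

theorem exists_forall_iterate_notMem {S : Finset α} {x : α} (hx : x ∈ S) {T : ℕ}
    (hT : S.card * T < minimalPeriod f x) :
    ∃ y ∈ S, ∀ j ∈ Icc 1 T, f^[j] y ∉ S := by
  classical
  by_contra! hreturn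
  -- If every point of `S` returned within time `T`, the first `T` images of `S` would form a
  -- forward-invariant set, too small to contain the orbit of `x`.
  let V := (S ×ˢ Finset.range T).image fun q => f^[q.2] q.1
  have mem_V {y i} (hy : y ∈ S) (hi : i < T) : f^[i] y ∈ V :=
    Finset.mem_image.2 ⟨(y, i), by simp [hy, hi], rfl⟩
  have S_subset_V : ∀ y ∈ S, y ∈ V := fun y hy => by
    obtain ⟨j, hj, -⟩ := hreturn y hy
    exact mem_V (i := 0) hy (by grind)
  have V_invariant : ∀ y ∈ V, f y ∈ V := by
    intro y hy
    obtain ⟨⟨w, i⟩, hwi, rfl⟩ := Finset.mem_image.1 hy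
    obtain ⟨hw, hi⟩ := Finset.mem_product.1 hwi
    rw [← iterate_succ_apply' f]
    rcases lt_or_ge (i + 1) T with hlt | hge
    · exact mem_V hw hlt
    · obtain ⟨j, ⟨hj, hjT⟩, hreturn_w⟩ := hreturn w hw
      have hsplit : i + 1 = (i + 1 - j) + j := by lia
      rw [Nat.succ_eq_add_one, hsplit, iterate_add_apply]
      exact mem_V hreturn_w (by grind)
  have orbit_subset_V (n : ℕ) : f^[n] x ∈ V := by
    induction n with
    | zero => exact S_subset_V x hx
    | succ n ih => rw [iterate_succ_apply']; exact V_invariant _ ih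
  have hV : V.card ≤ S.card * T := by
    simpa [Finset.card_product] using
      Finset.card_image_le (s := S ×ˢ Finset.range T) (f := fun q => f^[q.2] q.1)
  exact (minimalPeriod_le_card orbit_subset_V).not_gt (hV.trans_lt hT)

theorem exists_finset_invariant_minimalPeriod_eq {x : α} (hx : x ∈ periodicPts f) :
    ∃ O : Finset α, O.Nonempty ∧ f '' O = O ∧ ∀ y ∈ O, minimalPeriod f y = minimalPeriod f x := by
  classical
  have mem_orbit {y} : y ∈ (periodicOrbit f x).toFinset ↔ ∃ n, f^[n] x = y := by
    rw [← mem_periodicOrbit_iff hx, periodicOrbit, Cycle.coe_toFinset, List.mem_toFinset,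
      Cycle.mem_coe_iff]
  refine ⟨(periodicOrbit f x).toFinset, ⟨x, mem_orbit.2 ⟨0, rfl⟩⟩, ?_, fun y hy => ?_⟩
  · ext y
    simp only [mem_image, Finset.mem_coe, mem_orbit]
    constructor
    · rintro ⟨-, ⟨n, rfl⟩, rfl⟩
      exact ⟨n + 1, iterate_succ_apply' f n x⟩
    · rintro ⟨n, rfl⟩
      obtain ⟨N, hN, hNx⟩ := hx
      refine ⟨_, ⟨n + (N - 1), rfl⟩, ?_⟩
      rw [← iterate_succ_apply' f, Nat.succ_eq_add_one, add_assoc, Nat.sub_add_cancel hN,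
        iterate_add_apply, hNx.eq]
  · obtain ⟨n, rfl⟩ := mem_orbit.1 hy
    exact minimalPeriod_apply_iterate hx n

theorem eq_of_tendsto_dist_iterate_zero {X : Type*} [MetricSpace X] {f : X → X} {x y : X}
    (hx : x ∈ periodicPts f) (hy : y ∈ periodicPts f)
    (h : Tendsto (fun n => dist (f^[n] x) (f^[n] y)) atTop (𝓝 0)) : x = y := by
  obtain ⟨k, hk, hkx⟩ := hx
  obtain ⟨l, hl, hly⟩ := hy
  have hconst (n : ℕ) : dist (f^[k * l * n] x) (f^[k * l * n] y) = dist x y := by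
    rw [((hkx.mul_const l).mul_const n).eq, ((hly.const_mul k).mul_const n).eq]
  have hsub := h.comp (tendsto_id.const_mul_atTop' (Nat.mul_pos hk hl))
  simp only [comp_def, id, hconst] at hsub
  exact dist_eq_zero.1 (tendsto_nhds_unique tendsto_const_nhds hsub)

end PeriodicPoints

section Distortion

variable {X Y : Type*} [PseudoMetricSpace X] [PseudoMetricSpace Y]

/-- The difference quotients of `f` based at `a` towards `b` and towards `u` differ at most by the
factor `exp (C * (dist a b + dist a u))`. The inequality is cleared of denominators, so it says
nothing when `b = a` or `u = a`. -/
def HasDistortionBound (f : X → Y) (C : ℝ≥0) (a b u : X) : Prop :=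
  dist (f a) (f u) * dist a b ≤
    Real.exp (C * (dist a b + dist a u)) * dist (f a) (f b) * dist a u

theorem HasDistortionBound.mono {f : X → Y} {C C' : ℝ≥0} {a b u : X}
    (h : HasDistortionBound f C a b u) (hC : C ≤ C') : HasDistortionBound f C' a b u :=
  h.trans (by gcongr)

end Distortion

section WanderingPairs

variable {X : Type*} [PseudoMetricSpace X] {f : X → X} {δ D : ℝ} {a b : X}

/-- `a` and `b` form a wandering pair up to time `T`: until then their orbits stay `δ`-close and
the successive distances add up to at most `D`. -/
def IsWanderingUpTo (f : X → X) (δ D : ℝ) (T : ℕ) (a b : X) : Prop :=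
  (∀ j < T, dist (f^[j] a) (f^[j] b) ≤ δ) ∧
    ∑ j ∈ Finset.range T, dist (f^[j] a) (f^[j] b) ≤ D

theorem IsWanderingUpTo.anti {S T : ℕ} (h : IsWanderingUpTo f δ D T a b) (hST : S ≤ T) :
    IsWanderingUpTo f δ D S a b :=
  ⟨fun j hj => h.1 j (hj.trans_le hST),
    (Finset.sum_le_sum_of_subset_of_nonneg (Finset.range_mono hST)
      fun _ _ _ => dist_nonneg).trans h.2⟩

theorem isClosed_setOf_isWanderingUpTo (hf : Continuous f) (T : ℕ) :
    IsClosed {q : X × X | IsWanderingUpTo f δ D T q.1 q.2} := by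
  have hdist (j : ℕ) : Continuous fun q : X × X => dist (f^[j] q.1) (f^[j] q.2) :=
    ((hf.iterate j).comp continuous_fst).dist ((hf.iterate j).comp continuous_snd)
  simp only [IsWanderingUpTo, ofPred_and, ofPred_forall]
  exact (isClosed_iInter fun j => isClosed_iInter fun _ =>
    isClosed_le (hdist j) continuous_const).inter
      (isClosed_le (continuous_finsetSum _ fun j _ => hdist j) continuous_const)

theorem IsWanderingUpTo.summable (h : ∀ T, IsWanderingUpTo f δ D T a b) :
    Summable fun n => dist (f^[n] a) (f^[n] b) :=
  summable_of_sum_range_le (fun _ => dist_nonneg) fun T => (h T).2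

end WanderingPairs

section AsymptoticOrbits

variable {X : Type*} [MetricSpace X] {f : X → X} {C : ℝ≥0} {a b u : X}

theorem dist_iterate_mul_dist_le (hf : Injective f) (hab : a ≠ b) {n : ℕ}
    (hC : ∀ j < n, HasDistortionBound f C (f^[j] a) (f^[j] b) (f^[j] u))
    (hu : ∀ j < n, dist (f^[j] a) (f^[j] u) ≤ dist (f^[j] a) (f^[j] b)) :
    dist (f^[n] a) (f^[n] u) * dist a b ≤
      Real.exp (2 * C * ∑ j ∈ Finset.range n, dist (f^[j] a) (f^[j] b)) *
        dist (f^[n] a) (f^[n] b) * dist a u := by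
  induction n with
  | zero => simp [mul_comm]
  | succ n ih =>
    have hpos : 0 < dist (f^[n] a) (f^[n] b) := dist_pos.2 ((hf.iterate n).ne hab)
    have hn := ih (fun j hj => hC j (by lia)) fun j hj => hu j (by lia)
    have hstep := hC n n.lt_succ_self
    have hle := hu n n.lt_succ_self
    rw [HasDistortionBound, ← iterate_succ_apply' f, ← iterate_succ_apply' f,
      ← iterate_succ_apply' f] at hstep
    set l := dist (f^[n] a) (f^[n] b)
    set r := dist (f^[n] a) (f^[n] u)
    set s := ∑ j ∈ Finset.range n, dist (f^[j] a) (f^[j] b) with hs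
    set l' := dist (f^[n.succ] a) (f^[n.succ] b)
    rw [Finset.sum_range_succ, ← hs]
    refine le_of_mul_le_mul_right ?_ hpos
    calc dist (f^[n + 1] a) (f^[n + 1] u) * dist a b * l
        = dist (f^[n + 1] a) (f^[n + 1] u) * l * dist a b := by ring
      _ ≤ Real.exp (C * (l + r)) * l' * r * dist a b := by gcongr
      _ ≤ Real.exp (C * (l + l)) * l' * r * dist a b := by gcongr
      _ = Real.exp (C * (l + l)) * l' * (r * dist a b) := by ring
      _ ≤ Real.exp (C * (l + l)) * l' * (Real.exp (2 * C * s) * l * dist a u) := by gcongr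
      _ = Real.exp (2 * C * s + C * (l + l)) * l' * dist a u * l := by rw [Real.exp_add]; ring
      _ = Real.exp (2 * C * (s + l)) * l' * dist a u * l := by ring_nf

variable {ε δ D η : ℝ}

theorem dist_iterate_le_of_summable (hf : Injective f)
    (hC : ∀ a b u, dist a b < ε → dist a u < ε → HasDistortionBound f C a b u)
    (hab : a ≠ b) (hlt : ∀ n, dist (f^[n] a) (f^[n] b) < ε)
    (hsum : Summable fun n => dist (f^[n] a) (f^[n] b))
    (hu : Real.exp (2 * C * ∑' n, dist (f^[n] a) (f^[n] b)) * dist a u ≤ dist a b) (n : ℕ) :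
    dist (f^[n] a) (f^[n] u) ≤ dist (f^[n] a) (f^[n] b) := by
  induction n using Nat.strong_induction_on with
  | _ n ih =>
    refine le_of_mul_le_mul_right ?_ (dist_pos.2 hab)
    calc dist (f^[n] a) (f^[n] u) * dist a b
        ≤ Real.exp (2 * C * ∑ j ∈ Finset.range n, dist (f^[j] a) (f^[j] b)) *
            dist (f^[n] a) (f^[n] b) * dist a u :=
          dist_iterate_mul_dist_le hf hab
            (fun j hj => hC _ _ _ (hlt j) ((ih j hj).trans_lt (hlt j))) ih
      _ ≤ Real.exp (2 * C * ∑' j, dist (f^[j] a) (f^[j] b)) *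
            dist (f^[n] a) (f^[n] b) * dist a u := by
          gcongr
          exact hsum.sum_le_tsum _ fun _ _ => dist_nonneg
      _ = dist (f^[n] a) (f^[n] b) *
            (Real.exp (2 * C * ∑' j, dist (f^[j] a) (f^[j] b)) * dist a u) := by ring
      _ ≤ dist (f^[n] a) (f^[n] b) * dist a b := by gcongr

theorem eventually_tendsto_dist_iterate_zero (hf : Injective f)
    (hC : ∀ a b u, dist a b < ε → dist a u < ε → HasDistortionBound f C a b u)
    (hab : a ≠ b) (hlt : ∀ n, dist (f^[n] a) (f^[n] b) < ε)
    (hsum : Summable fun n => dist (f^[n] a) (f^[n] b)) :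
    ∀ᶠ u in 𝓝 a, Tendsto (fun n => dist (f^[n] a) (f^[n] u)) atTop (𝓝 0) := by
  have hlim : Tendsto
      (fun u => Real.exp (2 * C * ∑' n, dist (f^[n] a) (f^[n] b)) * dist a u) (𝓝 a) (𝓝 0) :=
    Continuous.tendsto' (by fun_prop) _ _ (by simp)
  filter_upwards [hlim.eventually_lt_const (dist_pos.2 hab)] with u hu
  exact squeeze_zero (fun _ => dist_nonneg)
    (dist_iterate_le_of_summable hf hC hab hlt hsum hu.le) hsum.tendsto_atTop_zero

-- Wandering pairs accumulate at a pair wandering forever, near which every orbit is asymptotic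
-- to one of the two limit orbits, whereas distinct periodic orbits are never asymptotic.
theorem exists_forall_not_isWanderingUpTo [CompactSpace X] (hf : Continuous f)
    (hinj : Injective f)
    (hC : ∀ a b u, dist a b < ε → dist a u < ε → HasDistortionBound f C a b u)
    (hη : 0 < η) (hδ : δ < ε) :
    ∃ T, ∀ a ∈ periodicPts f, ∀ b ∈ periodicPts f, η ≤ dist a b →
      ¬ IsWanderingUpTo f δ D T a b := by
  by_contra! hpairs
  choose a ha b hb hfar hwand using hpairs
  obtain ⟨⟨a₀, b₀⟩, φ, hφ, hlim⟩ := CompactSpace.tendsto_subseq fun T => (a T, b T)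
  have hfar₀ : η ≤ dist a₀ b₀ :=
    (isClosed_le continuous_const continuous_dist).mem_of_tendsto hlim
      (Eventually.of_forall fun k => hfar (φ k))
  have hne : a₀ ≠ b₀ := dist_pos.1 (hη.trans_le hfar₀)
  have hwand₀ (T : ℕ) : IsWanderingUpTo f δ D T a₀ b₀ :=
    (isClosed_setOf_isWanderingUpTo hf T).mem_of_tendsto hlim <|
      (eventually_ge_atTop T).mono fun k hk => (hwand (φ k)).anti (hk.trans (hφ.id_le k))
  have hlt (n : ℕ) : dist (f^[n] a₀) (f^[n] b₀) < ε :=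
    ((hwand₀ (n + 1)).1 n n.lt_succ_self).trans_lt hδ
  have hsum : Summable fun n => dist (f^[n] a₀) (f^[n] b₀) := IsWanderingUpTo.summable hwand₀
  have near_a₀ := eventually_tendsto_dist_iterate_zero hinj hC hne hlt hsum
  have near_b₀ := eventually_tendsto_dist_iterate_zero hinj hC hne.symm
    (by simpa only [dist_comm] using hlt) (by simpa only [dist_comm] using hsum)
  obtain ⟨k, hka, hkb⟩ := (hlim.eventually (Eventually.prod_nhds near_a₀ near_b₀)).exists
  have hbound := (hka.add hsum.tendsto_atTop_zero).add hkb
  simp only [add_zero, comp_apply] at hbound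
  have hasymp : Tendsto (fun n => dist (f^[n] (a (φ k))) (f^[n] (b (φ k)))) atTop (𝓝 0) :=
    squeeze_zero (fun _ => dist_nonneg)
      (fun n => (dist_triangle4 _ (f^[n] a₀) (f^[n] b₀) _).trans_eq
        (by rw [dist_comm (f^[n] (a (φ k)))])) hbound
  have heq := eq_of_tendsto_dist_iterate_zero (ha (φ k)) (hb (φ k)) hasymp
  exact (hη.trans_le (hfar (φ k))).ne' (dist_eq_zero.2 heq)

end AsymptoticOrbits

section Uniformization

variable {X ι : Type*} [PseudoMetricSpace X] [CompactSpace X] [SemilatticeSup ι] [Nonempty ι]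

theorem exists_forall_dist_lt_of_eventually_nhds {P : ι → X → X → X → Prop} (hP : Monotone P)
    (h : ∀ p, ∃ i, ∀ᶠ q in 𝓝 (p, p, p), P i q.1 q.2.1 q.2.2) :
    ∃ i, ∃ ε > 0, ∀ x y z, dist x y < ε → dist x z < ε → P i x y z := by
  let W (i : ι) : Set (X × X × X) := {q | P i q.1 q.2.1 q.2.2}
  have hdiag : IsCompact (range fun p : X => (p, p, p)) := isCompact_range (by fun_prop)
  obtain ⟨i, hi⟩ := hdiag.elim_directed_cover (fun i => interior (W i)) (fun _ => isOpen_interior)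
    (range_subset_iff.2 fun p => by
      obtain ⟨i, hi⟩ := h p
      exact mem_iUnion_of_mem i (mem_interior_iff_mem_nhds.2 hi))
    (Monotone.directed_le fun i j hij =>
      interior_mono fun q : X × X × X => hP hij q.1 q.2.1 q.2.2)
  obtain ⟨ε, hε, hsub⟩ := hdiag.exists_thickening_subset_open isOpen_interior hi
  refine ⟨i, ε, hε, fun x y z hy hz => ?_⟩
  have hmem : (x, y, z) ∈ Metric.thickening ε (range fun p : X => (p, p, p)) :=
    Metric.mem_thickening_iff.2 ⟨(x, x, x), mem_range_self x, by
      simpa [Prod.dist_eq, hε, dist_comm] using And.intro hy hz⟩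
  exact interior_subset (s := W i) (hsub hmem)

end Uniformization

section RealDiffeo

variable {F F' : ℝ → ℝ} {s : Set ℝ} {x y z : ℝ}

theorem exists_dist_image_eq_abs_mul_dist (hF : ∀ t ∈ uIcc x y, HasDerivAt F (F' t) t) :
    ∃ ξ ∈ uIcc x y, dist (F x) (F y) = |F' ξ| * dist x y := by
  wlog hxy : x ≤ y generalizing x y
  · simpa only [uIcc_comm, dist_comm] using this (by rwa [uIcc_comm]) (le_of_not_ge hxy)
  rcases hxy.eq_or_lt with rfl | hlt
  · exact ⟨x, left_mem_uIcc, by simp⟩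
  rw [uIcc_of_lt hlt] at hF ⊢
  obtain ⟨ξ, hξ, hslope⟩ := exists_hasDerivAt_eq_slope F F' hlt
    (fun t ht => (hF t ht).continuousAt.continuousWithinAt)
    fun t ht => hF t (Ioo_subset_Icc_self ht)
  refine ⟨ξ, Ioo_subset_Icc_self hξ, ?_⟩
  rw [dist_comm (F x), dist_comm x, Real.dist_eq, Real.dist_eq, ← abs_mul, hslope,
    div_mul_cancel₀ _ (sub_pos.2 hlt).ne']

theorem abs_le_exp_mul_abs_of_lipschitzOnWith_log {C : ℝ≥0}
    (hC : LipschitzOnWith C (fun t => Real.log |F' t|) s) (hx : x ∈ s) (hy : y ∈ s)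
    (hFx : F' x ≠ 0) (hFy : F' y ≠ 0) : |F' y| ≤ Real.exp (C * dist y x) * |F' x| := by
  have hlog : Real.log |F' y| ≤ C * dist y x + Real.log |F' x| := by
    linarith [le_abs_self (Real.log |F' y| - Real.log |F' x|), hC.dist_le_mul y hy x hx,
      Real.dist_eq (Real.log |F' y|) (Real.log |F' x|)]
  rwa [← Real.exp_le_exp, Real.exp_add, Real.exp_log (abs_pos.2 hFy),
    Real.exp_log (abs_pos.2 hFx)] at hlog

theorem hasDistortionBound_of_lipschitzOnWith_log {C : ℝ≥0} (hs : s.OrdConnected)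
    (hF : ∀ t ∈ s, HasDerivAt F (F' t) t) (hF' : ∀ t ∈ s, F' t ≠ 0)
    (hC : LipschitzOnWith C (fun t => Real.log |F' t|) s)
    (hx : x ∈ s) (hy : y ∈ s) (hz : z ∈ s) : HasDistortionBound F C x y z := by
  have hxy := hs.uIcc_subset hx hy
  have hxz := hs.uIcc_subset hx hz
  obtain ⟨ξ, hξ, hFxy⟩ := exists_dist_image_eq_abs_mul_dist fun t ht => hF t (hxy ht)
  obtain ⟨ζ, hζ, hFxz⟩ := exists_dist_image_eq_abs_mul_dist fun t ht => hF t (hxz ht)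
  have hdist : dist ζ ξ ≤ dist x y + dist x z := by
    have := Real.dist_left_le_of_mem_uIcc hξ
    have := Real.dist_left_le_of_mem_uIcc hζ
    linarith [dist_triangle_left ζ ξ x]
  have hderiv : |F' ζ| ≤ Real.exp (C * (dist x y + dist x z)) * |F' ξ| :=
    (abs_le_exp_mul_abs_of_lipschitzOnWith_log hC (hxy hξ) (hxz hζ) (hF' _ (hxy hξ))
      (hF' _ (hxz hζ))).trans (by gcongr)
  calc dist (F x) (F z) * dist x y
      = |F' ζ| * dist x z * dist x y := by rw [hFxz]
    _ ≤ Real.exp (C * (dist x y + dist x z)) * |F' ξ| * dist x z * dist x y := by gcongr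
    _ = Real.exp (C * (dist x y + dist x z)) * dist (F x) (F y) * dist x z := by rw [hFxy]; ring

end RealDiffeo

section Betweenness

variable {α β : Type*} [LinearOrder α] [LinearOrder β] {F : α → β} {s : Set α} {x y z : α}

theorem apply_mem_uIoo_iff_of_strictMonoOn_or_strictAntiOn
    (hF : StrictMonoOn F s ∨ StrictAntiOn F s) (hx : x ∈ s) (hy : y ∈ s) (hz : z ∈ s) :
    F y ∈ uIoo (F x) (F z) ↔ y ∈ uIoo x z := by
  rw [uIoo_eq_union, uIoo_eq_union]
  rcases hF with hF | hF
  · simp only [mem_union, mem_Ioo, hF.lt_iff_lt hx hy, hF.lt_iff_lt hy hz, hF.lt_iff_lt hz hy,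
      hF.lt_iff_lt hy hx]
  · simp only [mem_union, mem_Ioo, hF.lt_iff_gt hx hy, hF.lt_iff_gt hy hz, hF.lt_iff_gt hz hy,
      hF.lt_iff_gt hy hx, or_comm, and_comm]

end Betweenness

section DiffLip

variable {K : Set ℝ} {g : Equiv.Perm K}

theorem apK_coe (x : K) : apK K g x = g x := by simp [apK]

theorem IsD1Lip.continuous (hg : IsD1Lip K g) : Continuous g := by
  refine continuous_induced_rng.2 (continuous_iff_continuousAt.2 fun p => ?_)
  obtain ⟨a, b, hp, F, F', hF, -, -, -, hFg⟩ := hg p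
  have hFp : ContinuousAt (fun q : K => F q) p :=
    (hF p hp).1.continuousAt.comp continuous_subtype_val.continuousAt
  refine hFp.congr ?_
  filter_upwards [continuous_subtype_val.continuousAt.eventually_mem (Ioo_mem_nhds hp.1 hp.2)]
    with q hq
  rw [hFg q hq q.2, apK_coe, comp_apply]

theorem IsD1Lip.eventually_uIoo_iff_and_hasDistortionBound (hg : IsD1Lip K g) (p : K) :
    ∃ C : ℝ≥0, ∀ᶠ q : K × K × K in 𝓝 (p, p, p),
      (g q.2.1 ∈ uIoo (g q.1) (g q.2.2) ↔ q.2.1 ∈ uIoo q.1 q.2.2) ∧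
        HasDistortionBound g C q.1 q.2.1 q.2.2 := by
  obtain ⟨a, b, hp, F, F', hF, -, hinj, ⟨C, hC⟩, hFg⟩ := hg p
  let s : Set K := (↑) ⁻¹' Ioo a b
  have hs : s ∈ 𝓝 p := continuous_subtype_val.continuousAt (Ioo_mem_nhds hp.1 hp.2)
  have hFs {x : K} (hx : x ∈ s) : F x = g x := by rw [hFg x hx x.2, apK_coe]
  have hmono : StrictMonoOn g s ∨ StrictAntiOn g s := by
    have hcont : ContinuousOn F (Ioo a b) :=
      fun t ht => (hF t ht).1.continuousAt.continuousWithinAt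
    refine (hcont.strictMonoOn_of_injOn_Ioo (hp.1.trans hp.2) hinj).imp ?_ ?_ <;>
    intro h x hx y hy hxy <;>
    simpa only [hFs hx, hFs hy, Subtype.coe_lt_coe] using h hx hy hxy
  refine ⟨C, ?_⟩
  filter_upwards [prod_mem_nhds hs (prod_mem_nhds hs hs)] with ⟨x, y, z⟩ ⟨hx, hy, hz⟩
  refine ⟨apply_mem_uIoo_iff_of_strictMonoOn_or_strictAntiOn hmono hx hy hz, ?_⟩
  have hbound := hasDistortionBound_of_lipschitzOnWith_log ordConnected_Ioo
    (fun t ht => (hF t ht).1) (fun t ht => (hF t ht).2) hC hx hy hz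
  rwa [HasDistortionBound, hFs hx, hFs hy, hFs hz] at hbound

theorem IsD1Lip.exists_forall_uIoo_iff_and_hasDistortionBound [CompactSpace K]
    (hg : IsD1Lip K g) :
    ∃ C : ℝ≥0, ∃ ε > 0, ∀ x y z, dist x y < ε → dist x z < ε →
      (g y ∈ uIoo (g x) (g z) ↔ y ∈ uIoo x z) ∧ HasDistortionBound g C x y z :=
  exists_forall_dist_lt_of_eventually_nhds (fun _ _ hC _ _ _ h => ⟨h.1, h.2.mono hC⟩)
    hg.eventually_uIoo_iff_and_hasDistortionBound

end DiffLip

section ShortIntervals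

variable {K : Set ℝ} {x y z : K}

theorem dist_le_of_mem_uIoo (hy : y ∈ uIoo x z) : dist x y ≤ dist x z := by
  have hy' : (y : ℝ) ∈ uIcc (x : ℝ) z := by
    rw [uIoo_eq_union] at hy
    rcases hy with h | h
    · exact mem_uIcc_of_le h.1.le h.2.le
    · exact mem_uIcc_of_ge h.1.le h.2.le
  exact Real.dist_left_le_of_mem_uIcc hy'

theorem exists_forall_image_uIoo_eq [CompactSpace K] (f : K ≃ₜ K) {ε : ℝ}
    (hε : 0 < ε)
    (hf : ∀ x y z, dist x y < ε → dist x z < ε → (f y ∈ uIoo (f x) (f z) ↔ y ∈ uIoo x z)) :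
    ∃ δ > 0, ∀ x z, dist x z < δ → f '' uIoo x z = uIoo (f x) (f z) := by
  obtain ⟨ρ, hρ, hsymm⟩ := Metric.uniformContinuous_iff.1
    (CompactSpace.uniformContinuous_of_continuous f.symm.continuous) ε hε
  obtain ⟨σ, hσ, hunif⟩ := Metric.uniformContinuous_iff.1
    (CompactSpace.uniformContinuous_of_continuous f.continuous) ρ hρ
  refine ⟨min σ ε, lt_min hσ hε, fun x z hxz => ?_⟩
  have hxz_ε : dist x z < ε := hxz.trans_le (min_le_right _ _)
  have hfxz : dist (f x) (f z) < ρ := hunif (hxz.trans_le (min_le_left _ _))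
  refine Subset.antisymm ?_ fun w hw => ?_
  · rintro _ ⟨y, hy, rfl⟩
    exact (hf x y z ((dist_le_of_mem_uIoo hy).trans_lt hxz_ε) hxz_ε).2 hy
  · have hclose : dist x (f.symm w) < ε := by
      simpa using hsymm ((dist_le_of_mem_uIoo hw).trans_lt hfxz)
    refine ⟨f.symm w, (hf x _ z hclose hxz_ε).1 ?_, f.apply_symm_apply w⟩
    rwa [f.apply_symm_apply]

end ShortIntervals

section NeighbourTriples

variable {α β : Type*} [LinearOrder α] [LinearOrder β] {O : Set α} {w x y z : α}

/-- `x`, `y`, `z` are consecutive points of `O`, listed in increasing or in decreasing order. -/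
def IsNeighbourTriple (O : Set α) (x y z : α) : Prop :=
  x ∈ O ∧ z ∈ O ∧ uIoo x z ∩ O = {y}

namespace IsNeighbourTriple

theorem mem_uIoo (h : IsNeighbourTriple O x y z) : y ∈ uIoo x z :=
  inter_subset_left (h.2.2.superset rfl)

theorem mem (h : IsNeighbourTriple O x y z) : y ∈ O :=
  inter_subset_right (h.2.2.superset rfl)

theorem image {f : α → β} (hf : Injective f) (hI : f '' uIoo x z = uIoo (f x) (f z))
    (h : IsNeighbourTriple O x y z) : IsNeighbourTriple (f '' O) (f x) (f y) (f z) := by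
  refine ⟨mem_image_of_mem f h.1, mem_image_of_mem f h.2.1, ?_⟩
  rw [← hI, ← image_inter hf, h.2.2, image_singleton]

theorem sup_le (h : IsNeighbourTriple O x y z) (hw : w ∈ O) (hyw : y < w) : x ⊔ z ≤ w := by
  by_contra! hlt
  have hwy : w ∈ uIoo x z ∩ O := ⟨⟨h.mem_uIoo.1.trans hyw, hlt⟩, hw⟩
  rw [h.2.2] at hwy
  exact hyw.ne' hwy

theorem le_inf (h : IsNeighbourTriple O x y z) (hw : w ∈ O) (hwy : w < y) : w ≤ x ⊓ z := by
  by_contra! hlt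
  have hwy' : w ∈ uIoo x z ∩ O := ⟨⟨hlt, hwy.trans h.mem_uIoo.2⟩, hw⟩
  rw [h.2.2] at hwy'
  exact hwy.ne hwy'

end IsNeighbourTriple

theorem exists_isNeighbourTriple (hO : O.Finite) (hx : x ∈ O) (hy : y ∈ O) (hz : z ∈ O)
    (hyxz : y ∈ uIoo x z) : ∃ a b, IsNeighbourTriple O a y b := by
  wlog hxz : x ≤ z generalizing x z
  · exact this hz hx (uIoo_comm x z ▸ hyxz) (le_of_not_ge hxz)
  rw [uIoo_of_le hxz] at hyxz
  obtain ⟨a, ha⟩ := (hO.inter_of_left (Iio y)).exists_maximal ⟨x, hx, hyxz.1⟩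
  obtain ⟨b, hb⟩ := (hO.inter_of_left (Ioi y)).exists_minimal ⟨z, hz, hyxz.2⟩
  have hay : a < y := ha.prop.2
  have hyb : y < b := hb.prop.2
  refine ⟨a, b, ha.prop.1, hb.prop.1, ?_⟩
  rw [uIoo_of_lt (hay.trans hyb)]
  ext w
  refine ⟨fun ⟨⟨haw, hwb⟩, hw⟩ => ?_, ?_⟩
  · rcases lt_trichotomy w y with hwy | rfl | hwy
    · exact absurd haw (ha.not_gt ⟨hw, hwy⟩)
    · rfl
    · exact absurd hwb (hb.not_lt ⟨hw, hwy⟩)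
  · rintro rfl
    exact ⟨⟨hay, hyb⟩, hy⟩

end NeighbourTriples

section TotalLength

open MeasureTheory

theorem sum_sub_le_of_disjoint {ι : Type*} {s : Finset ι} {l r : ι → ℝ} {A B : ℝ}
    (hAB : A ≤ B) (hl : ∀ i ∈ s, A ≤ l i) (hr : ∀ i ∈ s, r i ≤ B)
    (hd : ∀ i ∈ s, ∀ j ∈ s, i ≠ j → r i ≤ l j ∨ r j ≤ l i) : ∑ i ∈ s, (r i - l i) ≤ B - A := by
  have hdisj : (s : Set ι).PairwiseDisjoint fun i => Ioo (l i) (r i) := by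
    intro i hi j hj hij
    refine disjoint_left.2 fun t hti htj => ?_
    rcases hd i hi j hj hij with h | h
    · exact (hti.2.trans_le h).not_gt htj.1
    · exact (htj.2.trans_le h).not_gt hti.1
  calc ∑ i ∈ s, (r i - l i)
      ≤ ∑ i ∈ s, volume.real (Ioo (l i) (r i)) := by
        gcongr with i
        rw [Real.volume_real_Ioo]
        exact le_max_left _ _
    _ = volume.real (⋃ i ∈ s, Ioo (l i) (r i)) :=
        (measureReal_biUnion_finset hdisj (fun _ _ => measurableSet_Ioo)
          fun _ _ => measure_Ioo_lt_top.ne).symm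
    _ ≤ volume.real (Icc A B) :=
        measureReal_mono (iUnion₂_subset fun i hi =>
          Ioo_subset_Icc_self.trans (Icc_subset_Icc (hl i hi) (hr i hi))) measure_Icc_lt_top.ne
    _ = B - A := Real.volume_real_Icc_of_le hAB

variable {K : Set ℝ} {A B : ℝ} {O : Set K}

theorem dist_eq_coe_sup_sub_coe_inf (x z : K) : dist x z = (x ⊔ z : K) - (x ⊓ z : K) := by
  rcases le_total x z with h | h
  · rw [sup_of_le_right h, inf_of_le_left h, Subtype.dist_eq, dist_comm, Real.dist_eq,
      abs_of_nonneg (sub_nonneg.2 (Subtype.coe_le_coe.2 h))]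
  · rw [sup_of_le_left h, inf_of_le_right h, Subtype.dist_eq, Real.dist_eq,
      abs_of_nonneg (sub_nonneg.2 (Subtype.coe_le_coe.2 h))]

theorem sum_dist_le_of_isNeighbourTriple {ι : Type*} {s : Finset ι} {x y z : ι → K}
    (hK : K ⊆ Icc A B) (hAB : A ≤ B) (h : ∀ i ∈ s, IsNeighbourTriple O (x i) (y i) (z i))
    (hy : InjOn y s) : ∑ i ∈ s, dist (x i) (z i) ≤ 2 * (B - A) := by
  have hright : ∑ i ∈ s, (((x i ⊔ z i : K) : ℝ) - y i) ≤ B - A :=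
    sum_sub_le_of_disjoint hAB (fun i _ => (hK (y i).2).1) (fun i _ => (hK (Subtype.prop _)).2)
      fun i hi j hj hij => (hy.ne hi hj hij).lt_or_gt.imp
        (fun hlt => (h i hi).sup_le (h j hj).mem hlt) fun hlt => (h j hj).sup_le (h i hi).mem hlt
  have hleft : ∑ i ∈ s, ((y i : ℝ) - (x i ⊓ z i : K)) ≤ B - A :=
    sum_sub_le_of_disjoint hAB (fun i _ => (hK (Subtype.prop _)).1) (fun i _ => (hK (y i).2).2)
      fun i hi j hj hij => (hy.ne hi hj hij).lt_or_gt.imp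
        (fun hlt => (h j hj).le_inf (h i hi).mem hlt) fun hlt => (h i hi).le_inf (h j hj).mem hlt
  calc ∑ i ∈ s, dist (x i) (z i)
      = ∑ i ∈ s, (((x i ⊔ z i : K) : ℝ) - y i) + ∑ i ∈ s, ((y i : ℝ) - (x i ⊓ z i : K)) := by
        simp only [dist_eq_coe_sup_sub_coe_inf, ← Finset.sum_add_distrib, sub_add_sub_cancel]
    _ ≤ 2 * (B - A) := by linarith

end TotalLength

section CrowdedPoints

theorem exists_mem_uIoo_of_two_lt_card {α : Type*} [LinearOrder α] {S : Finset α}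
    (hS : 2 < S.card) : ∃ x ∈ S, ∃ y ∈ S, ∃ z ∈ S, y ∈ uIoo x z := by
  have hne : S.Nonempty := Finset.card_pos.1 (by lia)
  obtain ⟨y, hy, hyne⟩ := Finset.exists_mem_notMem_of_card_lt_card
    (Finset.card_le_two.trans_lt hS : Finset.card {S.min' hne, S.max' hne} < S.card)
  simp only [Finset.mem_insert, Finset.mem_singleton, not_or] at hyne
  exact ⟨_, S.min'_mem hne, y, hy, _, S.max'_mem hne, mem_uIoo_of_lt
    ((S.min'_le y hy).lt_of_ne' hyne.1) ((S.le_max' y hy).lt_of_ne hyne.2)⟩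

variable {K : Set ℝ} {A B δ : ℝ} {O O' : Set K} {x y z : K}

/-- `y` lies between two points of `O` which are less than `δ` apart. -/
def IsCrowded (O : Set K) (δ : ℝ) (y : K) : Prop :=
  ∃ x ∈ O, ∃ z ∈ O, y ∈ uIoo x z ∧ dist x z < δ

theorem IsCrowded.mono (h : IsCrowded O δ y) (hO : O ⊆ O') : IsCrowded O' δ y :=
  let ⟨x, hx, z, hz, hyxz⟩ := h
  ⟨x, hO hx, z, hO hz, hyxz⟩

theorem IsNeighbourTriple.dist_lt_of_isCrowded (h : IsNeighbourTriple O x y z)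
    (hy : IsCrowded O δ y) : dist x z < δ := by
  obtain ⟨a, ha, b, hb, hyab, hab⟩ := hy
  refine lt_of_le_of_lt ?_ hab
  rw [dist_eq_coe_sup_sub_coe_inf, dist_eq_coe_sup_sub_coe_inf]
  exact sub_le_sub (h.sup_le (sup_ind (p := (· ∈ O)) a b ha hb) hyab.2)
    (h.le_inf (inf_ind (p := (· ∈ O)) a b ha hb) hyab.1)

theorem exists_isCrowded (hK : K ⊆ Icc A B) (hδ : 0 < δ) {S : Finset K}
    (hS : 2 * (⌊(B - A) / δ⌋₊ + 1) < S.card) : ∃ y ∈ S, IsCrowded S δ y := by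
  classical
  let bin (x : K) : ℕ := ⌊(x - A) / δ⌋₊
  have hbin (x) (_ : x ∈ S) : bin x ∈ Finset.range (⌊(B - A) / δ⌋₊ + 1) := by
    rw [Finset.mem_range, Nat.lt_succ_iff]
    exact Nat.floor_mono (by gcongr; exact (hK x.2).2)
  have hbin_eq {x : K} {k : ℕ} (hx : bin x = k) :
      (k : ℝ) ≤ (x - A) / δ ∧ (x - A) / δ < (k : ℝ) + 1 :=
    (Nat.floor_eq_iff (div_nonneg (sub_nonneg.2 (hK x.2).1) hδ.le)).1 hx
  obtain ⟨k, -, hk⟩ := Finset.exists_lt_card_fiber_of_mul_lt_card_of_maps_to hbin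
    (by rwa [Finset.card_range, mul_comm])
  obtain ⟨x, hx, y, hy, z, hz, hyxz⟩ := exists_mem_uIoo_of_two_lt_card hk
  rw [Finset.mem_filter] at hx hy hz
  refine ⟨y, hy.1, x, hx.1, z, hz.1, hyxz, ?_⟩
  have hsub : |((x - A) / δ : ℝ) - (z - A) / δ| < 1 := by
    have := hbin_eq hx.2
    have := hbin_eq hz.2
    grind
  rwa [← sub_div, sub_sub_sub_cancel_right, abs_div, abs_of_pos hδ, div_lt_one hδ] at hsub

theorem not_isCrowded_min' {O : Finset K} (hO : O.Nonempty) : ¬ IsCrowded O δ (O.min' hO) := by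
  rintro ⟨x, hx, z, hz, h, -⟩
  exact h.1.not_ge (inf_ind (p := (O.min' hO ≤ ·)) x z (O.min'_le x hx) (O.min'_le z hz))

variable {f : K → K} {T : ℕ}

theorem exists_not_isCrowded_forall_iterate_isCrowded {O : Finset K} (hK : K ⊆ Icc A B)
    (hδ : 0 < δ) (hO : O.Nonempty) (hfO : MapsTo f O O)
    (hT : ∀ x ∈ O, 2 * (⌊(B - A) / δ⌋₊ + 1) * (T + 1) < minimalPeriod f x) :
    ∃ y ∈ O, ¬ IsCrowded O δ y ∧ ∀ j ≤ T, IsCrowded O δ (f^[j] (f y)) := by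
  classical
  let S : Finset K := {y ∈ O | ¬ IsCrowded O δ y}
  have hSO : S ⊆ O := Finset.filter_subset _ _
  have hcard : S.card ≤ 2 * (⌊(B - A) / δ⌋₊ + 1) := by
    by_contra! hlt
    obtain ⟨y, hy, hcrowded⟩ := exists_isCrowded hK hδ hlt
    exact (Finset.mem_filter.1 hy).2 (hcrowded.mono (Finset.coe_subset.2 hSO))
  have hmin : O.min' hO ∈ S := Finset.mem_filter.2 ⟨O.min'_mem hO, not_isCrowded_min' hO⟩
  obtain ⟨y, hy, hreturn⟩ := exists_forall_iterate_notMem hmin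
    ((Nat.mul_le_mul_right (T + 1) hcard).trans_lt (hT _ (O.min'_mem hO)))
  refine ⟨y, hSO hy, (Finset.mem_filter.1 hy).2, fun j hj => ?_⟩
  by_contra hnot
  exact hreturn (j + 1) ⟨by lia, by lia⟩
    (Finset.mem_filter.2 ⟨hfO.iterate (j + 1) (hSO hy), hnot⟩)

theorem IsNeighbourTriple.iterate (h : IsNeighbourTriple O x y z) (hf : Injective f)
    (hI : ∀ x z, dist x z < δ → f '' uIoo x z = uIoo (f x) (f z)) (hfO : f '' O = O)
    {n : ℕ} (hcrowded : ∀ j < n, IsCrowded O δ (f^[j] y)) :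
    IsNeighbourTriple O (f^[n] x) (f^[n] y) (f^[n] z) := by
  induction n with
  | zero => exact h
  | succ n ih =>
    have hn := ih fun j hj => hcrowded j (by lia)
    have hlt := hn.dist_lt_of_isCrowded (hcrowded n n.lt_succ_self)
    simp only [iterate_succ_apply']
    exact hfO ▸ hn.image hf (hI _ _ hlt)

-- Were `a` and `b` too close, then by `hη` their preimages would be `δ`-close and would enclose
-- the uncrowded point `y`.
theorem exists_isWanderingUpTo {η : ℝ} {O : Finset K} (hf : Injective f)
    (hI : ∀ x z, dist x z < δ → f '' uIoo x z = uIoo (f x) (f z))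
    (hη : ∀ x z, dist (f x) (f z) < η → dist x z < δ)
    (hK : K ⊆ Icc A B) (hδ : 0 < δ) (hO : O.Nonempty) (hfO : f '' O = O)
    (hT : ∀ x ∈ O, 2 * (⌊(B - A) / δ⌋₊ + 1) * (T + 1) < minimalPeriod f x) :
    ∃ a ∈ O, ∃ b ∈ O, η ≤ dist a b ∧ IsWanderingUpTo f δ (2 * (B - A)) T a b := by
  have hmaps : MapsTo f O O := mapsTo_iff_image_subset.2 hfO.subset
  obtain ⟨y, hy, hyδ, hcrowded⟩ :=
    exists_not_isCrowded_forall_iterate_isCrowded hK hδ hO hmaps hT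
  obtain ⟨x, hx, z, hz, hyxz, -⟩ := hcrowded 0 T.zero_le
  obtain ⟨a, b, hab⟩ := exists_isNeighbourTriple O.finite_toSet hx (hmaps hy) hz hyxz
  have htriple {j : ℕ} (hj : j < T) :
      IsNeighbourTriple (O : Set K) (f^[j] a) (f^[j] (f y)) (f^[j] b) :=
    hab.iterate hf hI hfO fun i hi => hcrowded i (hi.trans hj).le
  refine ⟨a, hab.1, b, hab.2.1, ?_, fun j hj =>
    ((htriple hj).dist_lt_of_isCrowded (hcrowded j hj.le)).le, ?_⟩
  · by_contra! hlt
    obtain ⟨a', ha', rfl⟩ := hfO.superset hab.1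
    obtain ⟨b', hb', rfl⟩ := hfO.superset hab.2.1
    have hlt' := hη a' b' hlt
    have hyab : y ∈ uIoo a' b' := by
      rw [← hf.mem_set_image, hI a' b' hlt']
      exact hab.mem_uIoo
    exact hyδ ⟨a', ha', b', hb', hyab, hlt'⟩
  · have hAB : A ≤ B := (hK y.2).1.trans (hK y.2).2
    have hT' : T < minimalPeriod f (f y) := by nlinarith [hT _ (hmaps hy)]
    exact sum_dist_le_of_isNeighbourTriple hK hAB (fun j hj => htriple (Finset.mem_range.1 hj))
      (iterate_injOn_Iio_minimalPeriod.mono fun j hj => (Finset.mem_range.1 hj).trans hT')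

end CrowdedPoints

section UniformPeriod

variable {K : Set ℝ}

theorem exists_forall_minimalPeriod_le_of_hasDistortionBound [CompactSpace K]
    {f : K → K} {C : ℝ≥0} {A B δ ε η : ℝ}
    (hcont : Continuous f) (hf : Injective f)
    (hC : ∀ x y z, dist x y < ε → dist x z < ε → HasDistortionBound f C x y z)
    (hI : ∀ x z, dist x z < δ → f '' uIoo x z = uIoo (f x) (f z))
    (hη : ∀ x z, dist (f x) (f z) < η → dist x z < δ) (hη₀ : 0 < η) (hδ : 0 < δ) (hδε : δ < ε)
    (hK : K ⊆ Icc A B) : ∃ R, ∀ x, minimalPeriod f x ≤ R := by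
  obtain ⟨T, hT⟩ := exists_forall_not_isWanderingUpTo (D := 2 * (B - A)) hcont hf hC hη₀ hδε
  refine ⟨2 * (⌊(B - A) / δ⌋₊ + 1) * (T + 1), fun x => ?_⟩
  by_contra! hlt
  have hx : x ∈ periodicPts f := minimalPeriod_pos_iff_mem_periodicPts.1 (Nat.zero_lt_of_lt hlt)
  obtain ⟨O, hO, hfO, hper⟩ := exists_finset_invariant_minimalPeriod_eq hx
  have hperiodic {y} (hy : y ∈ O) : y ∈ periodicPts f := by
    rw [← minimalPeriod_pos_iff_mem_periodicPts, hper y hy]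
    exact Nat.zero_lt_of_lt hlt
  obtain ⟨a, ha, b, hb, hfar, hwand⟩ := exists_isWanderingUpTo hf hI hη hK hδ hO hfO
    fun y hy => (hper y hy).symm ▸ hlt
  exact hT a (hperiodic ha) b (hperiodic hb) hfar hwand

theorem IsD1Lip.exists_forall_minimalPeriod_le {g : Equiv.Perm K} (hK : IsCompact K)
    (hg : IsD1Lip K g) : ∃ R, ∀ x, minimalPeriod g x ≤ R := by
  have : CompactSpace K := isCompact_iff_compactSpace.1 hK
  let f : K ≃ₜ K := hg.continuous.homeoOfEquivCompactToT2
  obtain ⟨C, ε, hε, hlocal⟩ := hg.exists_forall_uIoo_iff_and_hasDistortionBound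
  obtain ⟨δ', hδ', himage⟩ := exists_forall_image_uIoo_eq f hε
    fun x y z hxy hxz => (hlocal x y z hxy hxz).1
  let δ := min δ' (ε / 2)
  have hδ : 0 < δ := lt_min hδ' (half_pos hε)
  obtain ⟨η, hη, hsymm⟩ := Metric.uniformContinuous_iff.1
    (CompactSpace.uniformContinuous_of_continuous f.symm.continuous) δ hδ
  obtain ⟨A, hA⟩ := hK.bddBelow
  obtain ⟨B, hB⟩ := hK.bddAbove
  exact exists_forall_minimalPeriod_le_of_hasDistortionBound hg.continuous g.injective
    (fun x y z hxy hxz => (hlocal x y z hxy hxz).2)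
    (fun x z hxz => himage x z (hxz.trans_le (min_le_left _ _)))
    (fun x z hxz => by
      simpa only [f.symm_apply_apply] using hsymm (a := f x) (b := f z) hxz) hη hδ
    ((min_le_right _ _).trans_lt (half_lt_self hε)) fun x hx => ⟨hA hx, hB hx⟩

theorem exists_forall_mem_periodicPts_iff_isPeriodicPt {α : Type*} {f : α → α} {R : ℕ}
    (hR : ∀ x, minimalPeriod f x ≤ R) :
    ∃ N, 0 < N ∧ ∀ x, x ∈ periodicPts f ↔ IsPeriodicPt f N x :=
  ⟨R.factorial, R.factorial_pos, fun x =>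
    ⟨fun hx => isPeriodicPt_iff_minimalPeriod_dvd.2
      (Nat.dvd_factorial (minimalPeriod_pos_of_mem_periodicPts hx) (hR x)),
    fun hx => mk_mem_periodicPts R.factorial_pos hx⟩⟩

theorem periodic_points_uniform_period_general (K : Set ℝ) (hK : IsCompact K)
    (g : Equiv.Perm K) (hg : IsD1Lip K g) :
    ∃ N : ℕ, 1 ≤ N ∧ ∀ p : K, (∃ n : ℕ, 1 ≤ n ∧ (g ^ n) p = p) ↔ (g ^ N) p = p := by
  obtain ⟨R, hR⟩ := hg.exists_forall_minimalPeriod_le hK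
  obtain ⟨N, hN, hper⟩ := exists_forall_mem_periodicPts_iff_isPeriodicPt hR
  simp only [mem_periodicPts, IsPeriodicPt, IsFixedPt, Equiv.Perm.iterate_eq_pow] at hper
  exact ⟨N, hN, hper⟩

end UniformPeriod

/-- For `g ∈ diff^{1+Lip}(K)` there is `N ≥ 1` with
`Per(g) = {p ∈ K : g^N p = p}`. -/
theorem periodic_points_uniform_period (K : Set ℝ) (hK : IsCantorInR K)
    (g : Equiv.Perm K) (hg : MemDiffLip K g) :
    ∃ N : ℕ, 1 ≤ N ∧ ∀ p : K, (∃ n : ℕ, 1 ≤ n ∧ (g ^ n) p = p) ↔ (g ^ N) p = p :=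
  periodic_points_uniform_period_general K hK.2.1 g hg.2.2
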